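/- arXiv:1707.00566 — 8 statements merged into one kernel-verified Lean document; each statement's English description precedes it below -/
import Mathlib

section
/- Let N be a finite set, K a real number, and u : N → ℝ with u_i ≥ 0 for all i ∈ N. Then the set function U^{DI}(A) = (K − |A|)·Σ_{i∈A} u_i defined on subsets A ⊆ N is normalized (U^{DI}(∅) = 0), nonnegative on every A with |A| ≤ K, and submodular: for all A ⊆ B ⊆ N and every x ∈ N \ B, U^{DI}(A ∪ {x}) − U^{DI}(A) ≥ U^{DI}(B ∪ {x}) − U^{DI}(B). -/
/-- The Direct Inspection utility `U^{DI}(A) = (K − |A|)·Σ_{i∈A} u_i`. -/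
noncomputable def UDI {ι : Type*} (K : ℝ) (u : ι → ℝ) (A : Finset ι) : ℝ :=
  (K - A.card) * ∑ i ∈ A, u i

section UDI

variable {ι : Type*} {K : ℝ} {u : ι → ℝ} {A B : Finset ι} {x : ι}

@[simp]
lemma UDI_empty (K : ℝ) (u : ι → ℝ) : UDI K u ∅ = 0 := by
  simp [UDI]

lemma UDI_nonneg (hu : ∀ i ∈ A, 0 ≤ u i) (hA : (A.card : ℝ) ≤ K) : 0 ≤ UDI K u A :=
  mul_nonneg (sub_nonneg.mpr hA) (Finset.sum_nonneg hu)

/-- The added resource earns `u x` in the remaining `K - |A| - 1` instants, while sensing it costs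
every resource already in `A` one instant. -/
lemma UDI_insert_sub_UDI [DecidableEq ι] (K : ℝ) (u : ι → ℝ) (hx : x ∉ A) :
    UDI K u (insert x A) - UDI K u A = (K - A.card - 1) * u x - ∑ i ∈ A, u i := by
  simp only [UDI, Finset.card_insert_of_notMem hx, Finset.sum_insert hx, Nat.cast_succ]
  ring

lemma UDI_insert_sub_UDI_anti [DecidableEq ι] (K : ℝ) (hAB : A ⊆ B) (hxB : x ∉ B)
    (hux : 0 ≤ u x) (hu : ∀ i ∈ B, i ∉ A → 0 ≤ u i) :
    UDI K u (insert x B) - UDI K u B ≤ UDI K u (insert x A) - UDI K u A := by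
  have hsum : ∑ i ∈ A, u i ≤ ∑ i ∈ B, u i := Finset.sum_le_sum_of_subset_of_nonneg hAB hu
  rw [UDI_insert_sub_UDI K u hxB, UDI_insert_sub_UDI K u (Finset.notMem_mono hAB hxB)]
  gcongr

end UDI

/-- Paper's Lemma 1: `U^{DI}` is normalized, nonnegative (on sets with `|A| ≤ K`)
and submodular. -/
theorem stmt_0 {ι : Type*} [DecidableEq ι] (N : Finset ι) (K : ℝ) (u : ι → ℝ)
    (hu : ∀ i ∈ N, 0 ≤ u i) :
    UDI K u (∅ : Finset ι) = 0 ∧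
    (∀ A : Finset ι, A ⊆ N → (A.card : ℝ) ≤ K → 0 ≤ UDI K u A) ∧
    (∀ A B : Finset ι, A ⊆ B → B ⊆ N → ∀ x ∈ N \ B,
      UDI K u (insert x B) - UDI K u B ≤ UDI K u (insert x A) - UDI K u A) := by
  refine ⟨UDI_empty K u, fun A hAN hA => UDI_nonneg (fun i hi => hu i (hAN hi)) hA, ?_⟩
  intro A B hAB hBN x hx
  obtain ⟨hxN, hxB⟩ := Finset.mem_sdiff.mp hx
  exact UDI_insert_sub_UDI_anti K hAB hxB (hu x hxN) fun i hi _ => hu i (hBN hi)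
end

section
/- Let N be a finite set, K a real number, u : N → ℝ, A ⊆ N, and let a, b ∈ N \ A be distinct. With U^{DI}(X) = (K − |X|)·Σ_{i∈X} u_i, the exchange deficiency is exactly U^{DI}(A ∪ {a}) + U^{DI}(A ∪ {b}) − U^{DI}(A ∪ {a, b}) − U^{DI}(A) = u_a + u_b; hence the submodularity inequality U^{DI}(A ∪ {a}) + U^{DI}(A ∪ {b}) ≥ U^{DI}(A ∪ {a, b}) + U^{DI}(A) holds if and only if u_a + u_b ≥ 0. -/
/-!
Both factors `K - |A|` and `∑ i ∈ A, u i` of the Direct Inspection utility are modular, with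
marginals `-1` and `u a` at a new element `a`. For a product of modular functions only the cross
terms of the marginals survive in the exchange deficiency, here `-((-1) * u b + (-1) * u a)`.
-/

section SetFunction

variable {ι G : Type*} [DecidableEq ι] [AddCommGroup G]

/-- The marginal value `f (A ∪ {a}) - f A` of `a` at `A` for a set function `f`, the discrete
derivative of `f` in direction `a`; it is meant for `a ∉ A`, and is `0` otherwise. -/
def marginal (f : Finset ι → G) (A : Finset ι) (a : ι) : G :=
  f (insert a A) - f A

/-- The exchange deficiency `f (A ∪ {a}) + f (A ∪ {b}) - f (A ∪ {a, b}) - f A` of a set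
function `f`, which measures how far `f` is from being modular at `A` in directions `a`, `b`. -/
def exchangeDeficiency (f : Finset ι → G) (A : Finset ι) (a b : ι) : G :=
  f (insert a A) + f (insert b A) - f (insert a (insert b A)) - f A

lemma exchangeDeficiency_eq_marginal_sub_marginal (f : Finset ι → G) (A : Finset ι) (a b : ι) :
    exchangeDeficiency f A a b = marginal f A a - marginal f (insert b A) a := by
  unfold exchangeDeficiency marginal
  abel

lemma exchangeDeficiency_nonneg_iff [PartialOrder G] [IsOrderedAddMonoid G]
    {f : Finset ι → G} {A : Finset ι} {a b : ι} :
    0 ≤ exchangeDeficiency f A a b ↔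
      f (insert a (insert b A)) + f A ≤ f (insert a A) + f (insert b A) := by
  rw [exchangeDeficiency, sub_sub, sub_nonneg]

lemma marginal_sum (u : ι → G) {A : Finset ι} {a : ι} (ha : a ∉ A) :
    marginal (fun X ↦ ∑ i ∈ X, u i) A a = u a := by
  simp [marginal, ha]

lemma exchangeDeficiency_sum (u : ι → G) {A : Finset ι} {a b : ι}
    (ha : a ∉ A) (hab : a ≠ b) :
    exchangeDeficiency (fun X ↦ ∑ i ∈ X, u i) A a b = 0 := by
  have ha' : a ∉ insert b A := by simp [hab, ha]
  rw [exchangeDeficiency_eq_marginal_sub_marginal, marginal_sum u ha, marginal_sum u ha', sub_self]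

end SetFunction

section Product

variable {ι R : Type*} [DecidableEq ι]

lemma exchangeDeficiency_mul [NonUnitalNonAssocRing R] {f g : Finset ι → R} {A : Finset ι}
    {a b : ι} (hf : exchangeDeficiency f A a b = 0) (hg : exchangeDeficiency g A a b = 0) :
    exchangeDeficiency (fun X ↦ f X * g X) A a b =
      -(marginal f A a * marginal g A b + marginal f A b * marginal g A a) := by
  have hf' : f (insert a (insert b A)) = f (insert a A) + f (insert b A) - f A := by
    rw [exchangeDeficiency, sub_right_comm, sub_eq_zero] at hf
    exact hf.symm
  have hg' : g (insert a (insert b A)) = g (insert a A) + g (insert b A) - g A := by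
    rw [exchangeDeficiency, sub_right_comm, sub_eq_zero] at hg
    exact hg.symm
  simp only [exchangeDeficiency, marginal, hf', hg', mul_add, mul_sub, add_mul, sub_mul]
  abel

variable [Ring R]

lemma marginal_const_sub_card (K : R) {A : Finset ι} {a : ι} (ha : a ∉ A) :
    marginal (fun X ↦ K - (X.card : R)) A a = -1 := by
  simp [marginal, ha]

lemma exchangeDeficiency_const_sub_card (K : R) {A : Finset ι} {a b : ι}
    (ha : a ∉ A) (hab : a ≠ b) :
    exchangeDeficiency (fun X ↦ K - (X.card : R)) A a b = 0 := by
  have ha' : a ∉ insert b A := by simp [hab, ha]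
  rw [exchangeDeficiency_eq_marginal_sub_marginal, marginal_const_sub_card K ha,
    marginal_const_sub_card K ha', sub_self]

lemma exchangeDeficiency_const_sub_card_mul_sum (K : R) (u : ι → R) {A : Finset ι} {a b : ι}
    (ha : a ∉ A) (hb : b ∉ A) (hab : a ≠ b) :
    exchangeDeficiency (fun X ↦ (K - (X.card : R)) * ∑ i ∈ X, u i) A a b = u a + u b := by
  rw [exchangeDeficiency_mul (exchangeDeficiency_const_sub_card K ha hab)
      (exchangeDeficiency_sum u ha hab),
    marginal_const_sub_card K ha, marginal_const_sub_card K hb, marginal_sum u ha,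
    marginal_sum u hb]
  simp only [neg_one_mul, neg_add_rev, neg_neg]

theorem stmt_1_general [PartialOrder R] [IsOrderedAddMonoid R] (K : R) (u : ι → R)
    {A : Finset ι} {a b : ι} (ha : a ∉ A) (hb : b ∉ A) (hab : a ≠ b) :
    let U : Finset ι → R := fun X ↦ (K - (X.card : R)) * ∑ i ∈ X, u i
    (U (insert a A) + U (insert b A) - U (insert a (insert b A)) - U A = u a + u b) ∧
    (U (insert a (insert b A)) + U A ≤ U (insert a A) + U (insert b A) ↔ 0 ≤ u a + u b) := by
  intro U
  have deficiency_eq : exchangeDeficiency U A a b = u a + u b :=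
    exchangeDeficiency_const_sub_card_mul_sum K u ha hb hab
  exact ⟨deficiency_eq, by rw [← exchangeDeficiency_nonneg_iff, deficiency_eq]⟩

end Product

/-- Key identity in the proof of the paper's Lemma 1: the exchange deficiency of
`U^{DI}` at `A` for two new elements `a ≠ b` equals `u a + u b`, hence the
submodularity inequality holds iff `u a + u b ≥ 0`. -/
theorem stmt_1 {ι : Type*} [DecidableEq ι] (N : Finset ι) (K : ℝ) (u : ι → ℝ)
    (A : Finset ι) (hA : A ⊆ N) (a b : ι) (ha : a ∈ N \ A) (hb : b ∈ N \ A)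
    (hab : a ≠ b) :
    (UDI K u (insert a A) + UDI K u (insert b A)
        - UDI K u (insert a (insert b A)) - UDI K u A = u a + u b) ∧
    (UDI K u (insert a (insert b A)) + UDI K u A
        ≤ UDI K u (insert a A) + UDI K u (insert b A) ↔ 0 ≤ u a + u b) :=
  stmt_1_general K u (Finset.mem_sdiff.mp ha).2 (Finset.mem_sdiff.mp hb).2 hab
end

section
/- Let u_1 ≥ u_2 ≥ … ≥ u_n ≥ 0 be real numbers and K a real number with n ≤ K. Define the marginal m(i) = (K − i − 1)·u_{i+1} − Σ_{k=1}^{i} u_k for 0 ≤ i ≤ n − 1 (equivalently m(i) = (K − i)u_{i+1} − Σ_{k=1}^{i+1} u_k). Then m is nonincreasing in i: m(i+1) ≤ m(i) for all 0 ≤ i ≤ n − 2. -/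
section Marginal

variable {R : Type*} [Ring R]

/-- The marginal increment `m(i) = g(i + 1) - g(i)` of the Direct Inspection objective
`g(i) = (K - i) * ∑_{k=1}^i u k` when an `(i + 1)`-th resource is added, in expanded form.
Utilities are indexed from `1`; the value `u 0` is never read. -/
def directInspectionMarginal (K : R) (u : ℕ → R) (i : ℕ) : R :=
  (K - i - 1) * u (i + 1) - ∑ k ∈ Finset.Icc 1 i, u k

theorem directInspectionMarginal_sub_succ (K : R) (u : ℕ → R) (i : ℕ) :
    directInspectionMarginal K u i - directInspectionMarginal K u (i + 1) =
      (K - (i + 2 : ℕ)) * (u (i + 1) - u (i + 2)) + 2 * u (i + 1) := by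
  simp only [directInspectionMarginal, Finset.sum_Icc_succ_top (Nat.le_add_left 1 i)]
  push_cast
  noncomm_ring

theorem stmt_3_general [PartialOrder R] [IsOrderedRing R] {K : R} {u : ℕ → R} {i : ℕ}
    (hK : (i + 2 : ℕ) ≤ K) (hle : u (i + 2) ≤ u (i + 1)) (hnonneg : 0 ≤ u (i + 1)) :
    directInspectionMarginal K u (i + 1) ≤ directInspectionMarginal K u i := by
  rw [← sub_nonneg, directInspectionMarginal_sub_succ]
  exact add_nonneg (mul_nonneg (sub_nonneg.mpr hK) (sub_nonneg.mpr hle))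
    (mul_nonneg zero_le_two hnonneg)

end Marginal

/-- Diminishing returns (underlying the greedy stopping rule, eq. (35)): with
`u 1 ≥ … ≥ u n ≥ 0` and `n ≤ K`, the marginal
`m(i) = (K − i − 1)·u (i+1) − Σ_{k=1}^i u k` is nonincreasing in `i` for
`0 ≤ i ≤ n − 2`. -/
theorem stmt_3 (n : ℕ) (K : ℝ) (u : ℕ → ℝ)
    (hnK : (n : ℝ) ≤ K)
    (hmono : ∀ k, 1 ≤ k → k < n → u (k + 1) ≤ u k)
    (hnonneg : ∀ k, 1 ≤ k → k ≤ n → 0 ≤ u k)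
    (i : ℕ) (hi : (i : ℤ) ≤ (n : ℤ) - 2) :
    (K - (i + 1) - 1) * u (i + 2) - ∑ k ∈ Finset.Icc 1 (i + 1), u k
      ≤ (K - i - 1) * u (i + 1) - ∑ k ∈ Finset.Icc 1 i, u k := by
  have hin : i + 2 ≤ n := by omega
  simpa only [directInspectionMarginal, Nat.cast_add, Nat.cast_one] using
    stmt_3_general ((Nat.cast_le.mpr hin).trans hnK)
      (hmono (i + 1) (by omega) hin) (hnonneg (i + 1) (by omega) (by omega))
end

section
/- Let u_1 ≥ u_2 ≥ … ≥ u_n ≥ 0 be real numbers, K a real number with n ≤ K, and define g(i) = (K − i)·Σ_{k=1}^{i} u_k for 0 ≤ i ≤ n and marginal m(i) = g(i+1) − g(i). If i* = min{ i : m(i) < 0 } exists, then g(i*) ≥ g(i) for all 0 ≤ i ≤ n; if no such i exists, then g(n) ≥ g(i) for all 0 ≤ i ≤ n. In other words, the greedy procedure that adds resources in decreasing order of utility and stops at the first negative marginal attains the maximum of g. -/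
/-- The Direct Inspection objective `g(i) = (K − i)·Σ_{k=1}^i u k` of sensing the
`i` best resources. -/
noncomputable def gDI (K : ℝ) (u : ℕ → ℝ) (i : ℕ) : ℝ :=
  (K - i) * ∑ k ∈ Finset.Icc 1 i, u k

/-!
Write `S i = u 1 + ⋯ + u i`. A negative marginal at `s` says `(K - s - 1) * u (s + 1) < S s`.
Since `u` is nonincreasing, `S i ≤ S s + (i - s) * u (s + 1)` for `i > s`, and the value
`(K - i) * (S s + (i - s) * u (s + 1))` of this chord is at most `(K - s) * S s` as soon as
`(K - i) * u (s + 1) ≤ S s`. When `u (s + 1) ≥ 0` this follows from the negative marginal. When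
`u (s + 1) ≤ 0` it follows from `S s ≥ 0`, which holds because `s < K`, `g` is nondecreasing up
to `s`, and `g 0 = 0`.
-/

theorem sum_Ioc_le_sum_Ioc_add_nsmul {M : Type*} [AddCommMonoid M] [PartialOrder M]
    [IsOrderedAddMonoid M] {f : ℕ → M} {r s i : ℕ} {c : M} (hrs : r ≤ s) (hsi : s ≤ i)
    (hf : ∀ k ∈ Finset.Ioc s i, f k ≤ c) :
    ∑ k ∈ Finset.Ioc r i, f k ≤ ∑ k ∈ Finset.Ioc r s, f k + (i - s) • c := by
  have htail : ∑ k ∈ Finset.Ioc s i, f k ≤ (i - s) • c := by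
    simpa only [Nat.card_Ioc] using Finset.sum_le_card_nsmul (Finset.Ioc s i) f c hf
  calc ∑ k ∈ Finset.Ioc r i, f k
      = ∑ k ∈ Finset.Ioc r s, f k + ∑ k ∈ Finset.Ioc s i, f k :=
        (Finset.sum_Ioc_consecutive f hrs hsi).symm
    _ ≤ ∑ k ∈ Finset.Ioc r s, f k + (i - s) • c := by gcongr

theorem gDI_zero (K : ℝ) (u : ℕ → ℝ) : gDI K u 0 = 0 := by
  simp [gDI]

theorem gDI_add_one_sub (K : ℝ) (u : ℕ → ℝ) (i : ℕ) :
    gDI K u (i + 1) - gDI K u i = (K - i - 1) * u (i + 1) - ∑ k ∈ Finset.Icc 1 i, u k := by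
  rw [gDI, gDI, Finset.sum_Icc_succ_top (by lia)]
  push_cast
  ring

theorem sum_nonneg_of_gDI_nonneg {K : ℝ} {u : ℕ → ℝ} {s : ℕ} (hsK : s < K)
    (hg : 0 ≤ gDI K u s) : 0 ≤ ∑ k ∈ Finset.Icc 1 s, u k :=
  nonneg_of_mul_nonneg_right hg (sub_pos.2 hsK)

theorem gDI_le_of_mul_le_sum {K : ℝ} {u : ℕ → ℝ} {s i : ℕ} {c : ℝ} (hsi : s ≤ i)
    (hiK : i ≤ K) (hu : ∀ k ∈ Finset.Ioc s i, u k ≤ c)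
    (hc : (K - i) * c ≤ ∑ k ∈ Finset.Icc 1 s, u k) :
    gDI K u i ≤ gDI K u s := by
  have hKi : 0 ≤ K - i := sub_nonneg.2 hiK
  have his : (0 : ℝ) ≤ i - s := sub_nonneg.2 (Nat.cast_le.2 hsi)
  have hchord : ∑ k ∈ Finset.Icc 1 i, u k ≤ ∑ k ∈ Finset.Icc 1 s, u k + (i - s) * c := by
    simpa only [← Finset.Icc_add_one_left_eq_Ioc, zero_add, nsmul_eq_mul, Nat.cast_sub hsi]
      using sum_Ioc_le_sum_Ioc_add_nsmul s.zero_le hsi hu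
  calc gDI K u i
      ≤ (K - i) * (∑ k ∈ Finset.Icc 1 s, u k + (i - s) * c) :=
        mul_le_mul_of_nonneg_left hchord hKi
    _ = (K - i) * ∑ k ∈ Finset.Icc 1 s, u k + (i - s) * ((K - i) * c) := by ring
    _ ≤ (K - i) * ∑ k ∈ Finset.Icc 1 s, u k + (i - s) * ∑ k ∈ Finset.Icc 1 s, u k := by gcongr
    _ = gDI K u s := by rw [gDI]; ring

theorem mul_le_sum_of_gDI_add_one_sub_neg {K : ℝ} {u : ℕ → ℝ} {s i : ℕ} (hsi : s < i)
    (hiK : i ≤ K) (hsum : 0 ≤ ∑ k ∈ Finset.Icc 1 s, u k)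
    (hneg : gDI K u (s + 1) - gDI K u s < 0) :
    (K - i) * u (s + 1) ≤ ∑ k ∈ Finset.Icc 1 s, u k := by
  rcases le_total 0 (u (s + 1)) with hpos | hnonpos
  · rw [gDI_add_one_sub, sub_neg] at hneg
    have hsi' : (s : ℝ) + 1 ≤ i := by exact_mod_cast hsi
    calc (K - i) * u (s + 1)
        ≤ (K - s - 1) * u (s + 1) := mul_le_mul_of_nonneg_right (by linarith) hpos
      _ ≤ ∑ k ∈ Finset.Icc 1 s, u k := hneg.le
  · exact (mul_nonpos_of_nonneg_of_nonpos (sub_nonneg.2 hiK) hnonpos).trans hsum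

theorem gDI_monotoneOn_Iic {K : ℝ} {u : ℕ → ℝ} {b : ℕ}
    (h : ∀ j < b, ¬ (gDI K u (j + 1) - gDI K u j < 0)) :
    MonotoneOn (gDI K u) (Set.Iic b) :=
  monotoneOn_of_le_add_one Set.ordConnected_Iic fun j _ _ hj =>
    sub_nonneg.1 (not_lt.1 (h j hj))

theorem stmt_4_general (n : ℕ) (K : ℝ) (u : ℕ → ℝ) (hnK : (n : ℝ) ≤ K)
    (hmono : ∀ k, 1 ≤ k → k < n → u (k + 1) ≤ u k) :
    (∀ istar < n,
      gDI K u (istar + 1) - gDI K u istar < 0 →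
      (∀ j < istar, ¬ (gDI K u (j + 1) - gDI K u j < 0)) →
      ∀ i ≤ n, gDI K u i ≤ gDI K u istar) ∧
    ((∀ i < n, ¬ (gDI K u (i + 1) - gDI K u i < 0)) →
      ∀ i ≤ n, gDI K u i ≤ gDI K u n) := by
  have hanti : AntitoneOn u (Set.Icc 1 n) :=
    antitoneOn_of_add_one_le Set.ordConnected_Icc fun k _ hk hk' => hmono k hk.1 hk'.2
  refine ⟨fun s hsn hneg hbefore i hin => ?_, fun h i hin =>
    gDI_monotoneOn_Iic h hin Set.self_mem_Iic hin⟩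
  have hup := gDI_monotoneOn_Iic hbefore
  rcases le_or_gt i s with his | hsi
  · exact hup his Set.self_mem_Iic his
  · have hsum : 0 ≤ ∑ k ∈ Finset.Icc 1 s, u k :=
      sum_nonneg_of_gDI_nonneg ((Nat.cast_lt.2 hsn).trans_le hnK)
        (gDI_zero K u ▸ hup s.zero_le Set.self_mem_Iic s.zero_le)
    have hiK : (i : ℝ) ≤ K := (Nat.cast_le.2 hin).trans hnK
    have hu : ∀ k ∈ Finset.Ioc s i, u k ≤ u (s + 1) := fun k hk => by
      obtain ⟨hsk, hki⟩ := Finset.mem_Ioc.1 hk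
      exact hanti ⟨by lia, hsn⟩ ⟨by lia, hki.trans hin⟩ hsk
    exact gDI_le_of_mul_le_sum hsi.le hiK hu
      (mul_le_sum_of_gDI_add_one_sub_neg hsi hiK hsum hneg)

/-- Paper's stopping rule, eq. (35): with `u 1 ≥ … ≥ u n ≥ 0` and `n ≤ K`, if
`i* = min{i : g(i+1) − g(i) < 0}` exists then `g i* = max_{0 ≤ i ≤ n} g i`;
otherwise `g n = max_{0 ≤ i ≤ n} g i`. -/
theorem stmt_4 (n : ℕ) (K : ℝ) (u : ℕ → ℝ)
    (hnK : (n : ℝ) ≤ K)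
    (hmono : ∀ k, 1 ≤ k → k < n → u (k + 1) ≤ u k)
    (hnonneg : ∀ k, 1 ≤ k → k ≤ n → 0 ≤ u k) :
    (∀ istar < n,
      gDI K u (istar + 1) - gDI K u istar < 0 →
      (∀ j < istar, ¬ (gDI K u (j + 1) - gDI K u j < 0)) →
      ∀ i ≤ n, gDI K u i ≤ gDI K u istar) ∧
    ((∀ i < n, ¬ (gDI K u (i + 1) - gDI K u i < 0)) →
      ∀ i ≤ n, gDI K u i ≤ gDI K u n) :=
  stmt_4_general n K u hnK hmono
end

section
/- Let V be a finite vertex set, K a real number, and assign to each possible edge e (an unordered pair of vertices, possibly a self-loop) a utility u_e ≥ 0. For a finite set E of edges let U^{GT}(E) = (K − |E|)·Σ_{e∈E} u_e, let deg_E(i) be the number of edges of E incident to vertex i, and let Υ(n) = max(n − 1, 0). Then for every M > 0 the function f(E) = U^{GT}(E) − M·Σ_{i∈V} Υ(deg_E(i)) is submodular in E: for all edge sets E ⊆ F and every edge e ∉ F, f(E ∪ {e}) − f(E) ≥ f(F ∪ {e}) − f(F). -/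
/-- The Group Testing utility `U^{GT}(E) = (K − |E|)·Σ_{e∈E} u_e` of a set `E` of
tests (edges, i.e. unordered pairs of vertices, possibly self-loops). -/
noncomputable def UGTe {V : Type*} (K : ℝ) (u : Sym2 V → ℝ) (E : Finset (Sym2 V)) : ℝ :=
  (K - E.card) * ∑ e ∈ E, u e

/-- The nodal degree `deg_E(i)`: the number of edges of `E` incident to vertex `i`. -/
def degE {V : Type*} [DecidableEq V] (E : Finset (Sym2 V)) (i : V) : ℕ :=
  (E.filter fun e => i ∈ e).card

/-- The penalized objective `f(E) = U^{GT}(E) − M·Σ_{i∈V} Υ(deg_E(i))`, where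
`Υ(n) = max(n − 1, 0)`. -/
noncomputable def fPen {V : Type*} [Fintype V] [DecidableEq V]
    (K : ℝ) (u : Sym2 V → ℝ) (M : ℝ) (E : Finset (Sym2 V)) : ℝ :=
  UGTe K u E - M * ∑ i : V, max ((degE E i : ℝ) - 1) 0

/-!
Since `U^{GT}(E) = K·Σ u − |E|·Σ u`, the utility is a modular function minus a product of two
nonnegative monotone modular functions, and such a product is supermodular. Each penalty
`Υ(deg_E(i))` is a convex function of the number of elements of `E` satisfying a predicate, hence
supermodular as well. Subtracting supermodular functions from a modular one leaves a submodular
function.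
-/

section SetFunction

open Finset

variable {α R : Type*} [DecidableEq α]

/-- A function of finite sets is submodular if the marginal gain of adding a new element decreases
as the set grows (the diminishing-returns form of submodularity). -/
def IsSubmodular [Sub R] [LE R] (f : Finset α → R) : Prop :=
  ∀ ⦃E F : Finset α⦄, E ⊆ F → ∀ ⦃e : α⦄, e ∉ F → f (insert e F) - f F ≤ f (insert e E) - f E

/-- A function of finite sets is supermodular if the marginal gain of adding a new element
increases as the set grows; this is the notion dual to `IsSubmodular`. -/
def IsSupermodular [Sub R] [LE R] (f : Finset α → R) : Prop :=
  ∀ ⦃E F : Finset α⦄, E ⊆ F → ∀ ⦃e : α⦄, e ∉ F → f (insert e E) - f E ≤ f (insert e F) - f F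

theorem sum_insert_sub_sum [AddCommGroup R] {w : α → R} {E : Finset α} {e : α} (he : e ∉ E) :
    ∑ x ∈ insert e E, w x - ∑ x ∈ E, w x = w e := by
  rw [sum_insert he, add_sub_cancel_right]

section OrderedAddCommGroup

variable [AddCommGroup R] [PartialOrder R]

theorem IsSubmodular.sub [IsOrderedAddMonoid R] {f g : Finset α → R} (hf : IsSubmodular f)
    (hg : IsSupermodular g) : IsSubmodular fun E ↦ f E - g E := by
  intro E F hEF e he
  simp only [sub_sub_sub_comm _ (g _)]
  exact sub_le_sub (hf hEF he) (hg hEF he)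

theorem IsSupermodular.sum [IsOrderedAddMonoid R] {ι : Type*} {s : Finset ι}
    {f : ι → Finset α → R} (hf : ∀ i ∈ s, IsSupermodular (f i)) :
    IsSupermodular fun E ↦ ∑ i ∈ s, f i E := by
  intro E F hEF e he
  simp only [← sum_sub_distrib]
  exact sum_le_sum fun i hi ↦ hf i hi hEF he

theorem isSubmodular_sum (w : α → R) : IsSubmodular fun E ↦ ∑ x ∈ E, w x := fun _ _ hEF _ he ↦
  ((sum_insert_sub_sum he).trans (sum_insert_sub_sum (notMem_mono hEF he)).symm).le

theorem isSupermodular_sum (w : α → R) : IsSupermodular fun E ↦ ∑ x ∈ E, w x := fun _ _ hEF _ he ↦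
  ((sum_insert_sub_sum (notMem_mono hEF he)).trans (sum_insert_sub_sum he).symm).le

theorem isSupermodular_comp_card_filter {g : ℕ → R} (hg : Monotone fun n ↦ g (n + 1) - g n)
    (p : α → Prop) [DecidablePred p] : IsSupermodular fun E ↦ g #{x ∈ E | p x} := by
  intro E F hEF e he
  have card_filter_insert {s : Finset α} (hs : e ∉ s) (hp : p e) :
      #{x ∈ insert e s | p x} = #{x ∈ s | p x} + 1 := by
    rw [filter_insert, if_pos hp, card_insert_of_notMem fun h ↦ hs (mem_of_mem_filter e h)]
  by_cases hp : p e
  · simp only [card_filter_insert he hp, card_filter_insert (notMem_mono hEF he) hp]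
    exact hg (card_le_card (filter_subset_filter p hEF))
  · simp only [filter_insert, if_neg hp, sub_self, le_refl]

end OrderedAddCommGroup

section OrderedRing

variable [Ring R] [PartialOrder R]

theorem isSupermodular_card : IsSupermodular fun E : Finset α ↦ (#E : R) := by
  simpa only [card_eq_sum_ones, Nat.cast_sum, Nat.cast_one] using
    isSupermodular_sum fun _ : α ↦ (1 : R)

variable [IsOrderedRing R]

theorem IsSupermodular.const_mul {f : Finset α → R} (hf : IsSupermodular f) {c : R} (hc : 0 ≤ c) :
    IsSupermodular fun E ↦ c * f E := by
  intro E F hEF e he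
  simp only [← mul_sub]
  exact mul_le_mul_of_nonneg_left (hf hEF he) hc

theorem IsSupermodular.mul {f g : Finset α → R} (hf : IsSupermodular f) (hg : IsSupermodular g)
    (hf_mono : Monotone f) (hg_mono : Monotone g) (hf_nonneg : ∀ E, 0 ≤ f E)
    (hg_nonneg : ∀ E, 0 ≤ g E) : IsSupermodular fun E ↦ f E * g E := by
  intro E F hEF e he
  have product_rule (A : Finset α) : f (insert e A) * g (insert e A) - f A * g A =
      (f (insert e A) - f A) * g (insert e A) + f A * (g (insert e A) - g A) := by
    noncomm_ring
  simp only [product_rule]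
  have f_gain_nonneg : 0 ≤ f (insert e F) - f F := sub_nonneg.2 (hf_mono (subset_insert e F))
  have g_gain_nonneg : 0 ≤ g (insert e E) - g E := sub_nonneg.2 (hg_mono (subset_insert e E))
  exact add_le_add
    (mul_le_mul (hf hEF he) (hg_mono (insert_subset_insert e hEF)) (hg_nonneg _) f_gain_nonneg)
    (mul_le_mul (hf_mono hEF) (hg hEF he) g_gain_nonneg (hf_nonneg F))

end OrderedRing

end SetFunction

section Convex

variable {𝕜 : Type*} [Field 𝕜] [LinearOrder 𝕜] [IsStrictOrderedRing 𝕜]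

theorem monotone_natCast_succ_sub_of_convexOn {g : 𝕜 → 𝕜} (hg : ConvexOn 𝕜 (Set.Ici 0) g) :
    Monotone fun n : ℕ ↦ g ↑(n + 1) - g n := by
  refine monotone_nat_of_le_succ fun n ↦ ?_
  have slope_le := hg.slope_mono_adjacent (x := (n : 𝕜)) (y := ↑(n + 1)) (z := ↑(n + 1 + 1))
    (Nat.cast_nonneg _) (Nat.cast_nonneg _) (by simp) (by simp)
  simpa only [Nat.cast_succ, add_sub_cancel_left, div_one] using slope_le

theorem convexOn_max_sub_const {s : Set 𝕜} (hs : Convex 𝕜 s) (b c : 𝕜) :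
    ConvexOn 𝕜 s fun x ↦ max (x - b) c :=
  ((convexOn_id hs).sub (concaveOn_const b hs)).sup (convexOn_const c hs)

end Convex

section GroupTesting

open Finset

variable {V : Type*} [DecidableEq V]

theorem isSubmodular_UGTe (K : ℝ) {u : Sym2 V → ℝ} (hu : ∀ e, 0 ≤ u e) :
    IsSubmodular (UGTe K u) := by
  have card_mul_sum : IsSupermodular fun E : Finset (Sym2 V) ↦ (#E : ℝ) * ∑ e ∈ E, u e :=
    isSupermodular_card.mul (isSupermodular_sum u) (Nat.mono_cast.comp card_mono)
      (sum_mono_set_of_nonneg hu) (fun E ↦ Nat.cast_nonneg #E) (fun E ↦ sum_nonneg fun e _ ↦ hu e)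
  have UGTe_eq : UGTe K u = fun E ↦ ∑ e ∈ E, K * u e - #E * ∑ e ∈ E, u e := by
    funext E
    rw [UGTe, sub_mul, mul_sum]
  rw [UGTe_eq]
  exact (isSubmodular_sum fun e ↦ K * u e).sub card_mul_sum

theorem isSupermodular_max_degE_sub_one (i : V) :
    IsSupermodular fun E ↦ max ((degE E i : ℝ) - 1) 0 :=
  isSupermodular_comp_card_filter (g := fun n ↦ max ((n : ℝ) - 1) 0)
    (monotone_natCast_succ_sub_of_convexOn (convexOn_max_sub_const (convex_Ici 0) 1 0)) (i ∈ ·)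

end GroupTesting

/-- First part of the paper's Lemma 2: for every `M > 0` the penalized objective
`f` is submodular in the edge set. -/
theorem stmt_6 {V : Type*} [Fintype V] [DecidableEq V]
    (K : ℝ) (u : Sym2 V → ℝ) (hu : ∀ e, 0 ≤ u e) (M : ℝ) (hM : 0 < M)
    (E F : Finset (Sym2 V)) (hEF : E ⊆ F) (e : Sym2 V) (he : e ∉ F) :
    fPen K u M (insert e F) - fPen K u M F
      ≤ fPen K u M (insert e E) - fPen K u M E := by
  have penalty_supermodular :
      IsSupermodular fun E ↦ M * ∑ i : V, max ((degE E i : ℝ) - 1) 0 :=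
    (IsSupermodular.sum fun i _ ↦ isSupermodular_max_degE_sub_one i).const_mul hM.le
  exact (isSubmodular_UGTe K hu).sub penalty_supermodular hEF he
end

section
/- Let V be a finite vertex set, K ≥ 1 a real number, u_e ≥ 0 a utility for each edge e (unordered pair of vertices, possibly a self-loop), U^{GT}(E) = (K − |E|)·Σ_{e∈E} u_e, deg_E(i) the number of edges of E incident to i, Υ(n) = max(n − 1, 0), and f(E) = U^{GT}(E) − M·Σ_{i∈V} Υ(deg_E(i)). If M > K·max_e u_e, then: (i) every maximizer E* of f over all edge sets satisfies deg_{E*}(i) ≤ 1 for all i ∈ V; and (ii) the maximum of f over all edge sets equals the maximum of U^{GT}(E) over edge sets E satisfying the constraint deg_E(i) ≤ 1 for all i ∈ V. -/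
/-!
Deleting an edge `e` costs at most `K * u e` in utility: it loses `(K - |E|) * u e`, while the
remaining tests gain one more time instant. If `e` is incident to an
over-used vertex, the deletion also saves at least `M > K * u e` in penalty, so a maximizer of the
penalized objective has no over-used vertex. On feasible edge sets the penalty vanishes.
-/

theorem isGreatest_iff_of_subset_of_mem {α : Type*} [PartialOrder α] {s t : Set α} {a b : α}
    (ha : IsGreatest t a) (hst : s ⊆ t) (has : a ∈ s) : IsGreatest t b ↔ IsGreatest s b := by
  have ha' : IsGreatest s a := ⟨has, upperBounds_mono_set hst ha.2⟩
  rw [ha.isGreatest_iff_eq, ha'.isGreatest_iff_eq]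

section EdgeSets

variable {V : Type*} [DecidableEq V] {E F : Finset (Sym2 V)} {e : Sym2 V} {i : V}

theorem degE_mono (hEF : E ⊆ F) (i : V) : degE E i ≤ degE F i :=
  Finset.card_le_card (Finset.filter_subset_filter _ hEF)

theorem degE_erase_add_one (he : e ∈ E) (hi : i ∈ e) : degE (E.erase e) i + 1 = degE E i := by
  unfold degE
  rw [Finset.filter_erase, Finset.card_erase_add_one (Finset.mem_filter.mpr ⟨he, hi⟩)]

theorem degE_pos_iff : 0 < degE E i ↔ ∃ e ∈ E, i ∈ e :=
  Finset.card_pos.trans Finset.filter_nonempty_iff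

theorem UGTe_erase (K : ℝ) (u : Sym2 V → ℝ) (he : e ∈ E) :
    UGTe K u (E.erase e) = UGTe K u E - (K - E.card) * u e + ∑ x ∈ E.erase e, u x := by
  have hcard : ((E.erase e).card : ℝ) + 1 = E.card := by
    exact_mod_cast Finset.card_erase_add_one he
  unfold UGTe
  rw [← Finset.add_sum_erase _ _ he, ← hcard]
  ring

theorem UGTe_le_UGTe_erase_add (K : ℝ) {u : Sym2 V → ℝ} (hu : ∀ x ∈ E, 0 ≤ u x) (he : e ∈ E) :
    UGTe K u E ≤ UGTe K u (E.erase e) + K * u e := by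
  have hrest : 0 ≤ ∑ x ∈ E.erase e, u x :=
    Finset.sum_nonneg fun x hx => hu x (Finset.mem_of_mem_erase hx)
  have hcard : 0 ≤ (E.card : ℝ) * u e := mul_nonneg E.card.cast_nonneg (hu e he)
  rw [UGTe_erase K u he]
  linarith

section Penalty

variable [Fintype V]

/-- The total degree excess `Σ_{i∈V} Υ(deg_E(i))`, which the penalized objective charges at
price `M`. Truncated subtraction in `ℕ` encodes `Υ(n) = max(n − 1, 0)`. -/
def degreeExcess (E : Finset (Sym2 V)) : ℕ :=
  ∑ i : V, (degE E i - 1)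

theorem degreeExcess_eq_zero_iff : degreeExcess E = 0 ↔ ∀ i, degE E i ≤ 1 := by
  simp [degreeExcess, Nat.sub_eq_zero_iff_le]

theorem degreeExcess_erase_lt (he : e ∈ E) (hi : i ∈ e) (hdeg : 1 < degE E i) :
    degreeExcess (E.erase e) < degreeExcess E := by
  refine Finset.sum_lt_sum (fun j _ => Nat.sub_le_sub_right (degE_mono (E.erase_subset e) j) 1)
    ⟨i, Finset.mem_univ i, ?_⟩
  have := degE_erase_add_one he hi
  omega

theorem fPen_eq_UGTe_sub (K : ℝ) (u : Sym2 V → ℝ) (M : ℝ) (E : Finset (Sym2 V)) :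
    fPen K u M E = UGTe K u E - M * degreeExcess E := by
  have hcast (n : ℕ) : ((n - 1 : ℕ) : ℝ) = max ((n : ℝ) - 1) 0 := by
    cases n <;> simp
  simp only [fPen, degreeExcess, Nat.cast_sum, hcast]

theorem fPen_eq_UGTe (K : ℝ) (u : Sym2 V → ℝ) (M : ℝ) (hE : ∀ i, degE E i ≤ 1) :
    fPen K u M E = UGTe K u E := by
  rw [fPen_eq_UGTe_sub, degreeExcess_eq_zero_iff.mpr hE, Nat.cast_zero, mul_zero, sub_zero]

variable {K M : ℝ} {u : Sym2 V → ℝ}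

theorem fPen_lt_fPen_erase (hu : ∀ x ∈ E, 0 ≤ u x) (hM : 0 ≤ M) (hKM : K * u e < M)
    (he : e ∈ E) (hi : i ∈ e) (hdeg : 1 < degE E i) :
    fPen K u M E < fPen K u M (E.erase e) := by
  have hexcess : (degreeExcess (E.erase e) : ℝ) + 1 ≤ degreeExcess E := by
    exact_mod_cast degreeExcess_erase_lt he hi hdeg
  simp only [fPen_eq_UGTe_sub]
  calc UGTe K u E - M * degreeExcess E
      ≤ UGTe K u (E.erase e) + K * u e - M * (degreeExcess (E.erase e) + 1) :=
        sub_le_sub (UGTe_le_UGTe_erase_add K hu he) (mul_le_mul_of_nonneg_left hexcess hM)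
    _ < UGTe K u (E.erase e) - M * degreeExcess (E.erase e) := by linarith

theorem degE_le_one_of_forall_fPen_le (hK : 0 ≤ K) (hu : ∀ x ∈ E, 0 ≤ u x)
    (hM : ∀ x ∈ E, K * u x < M) (hmax : ∀ F, fPen K u M F ≤ fPen K u M E) (i : V) :
    degE E i ≤ 1 := by
  by_contra! hdeg
  obtain ⟨e, he, hi⟩ := degE_pos_iff.mp (zero_lt_one.trans hdeg)
  have hM_nonneg : 0 ≤ M := (mul_nonneg hK (hu e he)).trans (hM e he).le
  exact (hmax (E.erase e)).not_gt (fPen_lt_fPen_erase hu hM_nonneg (hM e he) he hi hdeg)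

end Penalty

end EdgeSets

/-- Second part of the paper's Lemma 2: if `M > K·max_e u_e` then every maximizer
of the penalized objective satisfies the degree constraint, and the maximum of the
penalized objective over all edge sets equals the maximum of `U^{GT}` over edge
sets with nodal degree at most one. -/
theorem stmt_8 {V : Type*} [Fintype V] [DecidableEq V]
    (K : ℝ) (hK : 1 ≤ K) (u : Sym2 V → ℝ) (hu : ∀ e, 0 ≤ u e)
    (M : ℝ) (hM : ∀ e : Sym2 V, K * u e < M) :
    (∀ Estar : Finset (Sym2 V),
        (∀ E : Finset (Sym2 V), fPen K u M E ≤ fPen K u M Estar) →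
        ∀ i : V, degE Estar i ≤ 1) ∧
    (∀ m : ℝ,
        IsGreatest (Set.range (fPen K u M)) m ↔
        IsGreatest ((fun E => UGTe K u E) ''
          {E : Finset (Sym2 V) | ∀ i : V, degE E i ≤ 1}) m) := by
  have hfeasible (E : Finset (Sym2 V)) (hmax : ∀ F, fPen K u M F ≤ fPen K u M E) :
      ∀ i, degE E i ≤ 1 :=
    degE_le_one_of_forall_fPen_le (zero_le_one.trans hK) (fun e _ => hu e) (fun e _ => hM e) hmax
  refine ⟨hfeasible, fun m => ?_⟩
  obtain ⟨E, hmax⟩ := Finite.exists_max (fPen K u M)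
  have hgreatest : IsGreatest (Set.range (fPen K u M)) (fPen K u M E) :=
    ⟨Set.mem_range_self E, Set.forall_mem_range.mpr hmax⟩
  have himage : fPen K u M '' {E | ∀ i, degE E i ≤ 1} = UGTe K u '' {E | ∀ i, degE E i ≤ 1} :=
    Set.image_congr fun _ hE => fPen_eq_UGTe K u M hE
  rw [← himage]
  exact isGreatest_iff_of_subset_of_mem hgreatest (Set.image_subset_range _ _)
    (Set.mem_image_of_mem _ (hfeasible E hmax))
end

section
/- Let u_1 ≥ u_2 ≥ … be real numbers with u_k ≥ 0 for all k, let K be a real number, and let i be a nonnegative integer with 2i + 1 ≥ K. Then (K − i − 1)·u_{i+1} ≤ Σ_{k=1}^{i} u_k; i.e., the marginal increment of the objective g(i) = (K − i)·Σ_{k=1}^{i} u_k of adding an (i+1)-th test is nonpositive once i ≥ (K−1)/2. Consequently the number of tests selected by the greedy maximization never exceeds ⌈(K−1)/2⌉. -/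
section

variable {M : Type*} [AddCommMonoid M] [Preorder M] [IsOrderedAddMonoid M] {u : ℕ → M} {i : ℕ}

theorem nsmul_succ_le_sum_Icc_of_antitoneOn (hu : AntitoneOn u (Set.Icc 1 (i + 1))) :
    i • u (i + 1) ≤ ∑ k ∈ Finset.Icc 1 i, u k := by
  have last_le : ∀ k ∈ Finset.Icc 1 i, u (i + 1) ≤ u k := fun k hk ↦ by
    obtain ⟨one_le, le_i⟩ := Finset.mem_Icc.mp hk
    exact hu ⟨one_le, by lia⟩ ⟨by lia, le_rfl⟩ (by lia)
  simpa only [Nat.card_Icc, Nat.add_sub_cancel] using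
    Finset.card_nsmul_le_sum (Finset.Icc 1 i) u (u (i + 1)) last_le

theorem stmt_11_general {R : Type*} [Ring R] [Preorder R] [IsOrderedAddMonoid R]
    [Module R M] [SMulPosMono R M] {K : R} (hu : AntitoneOn u (Set.Icc 1 (i + 1)))
    (hlast : 0 ≤ u (i + 1)) (hi : K ≤ 2 * i + 1) :
    (K - i - 1) • u (i + 1) ≤ ∑ k ∈ Finset.Icc 1 i, u k := by
  have coeff_le : K - i - 1 ≤ i := by
    rwa [sub_sub, sub_le_iff_le_add, ← add_assoc, ← two_mul]
  calc (K - i - 1) • u (i + 1)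
      ≤ (i : R) • u (i + 1) := smul_le_smul_of_nonneg_right coeff_le hlast
    _ = i • u (i + 1) := Nat.cast_smul_eq_nsmul R i (u (i + 1))
    _ ≤ ∑ k ∈ Finset.Icc 1 i, u k := nsmul_succ_le_sum_Icc_of_antitoneOn hu

end

/-- Paper's claim that the greedy never selects more than `⌈(K−1)/2⌉` tests: with
`u 1 ≥ u 2 ≥ … ≥ 0` and `2i + 1 ≥ K`, the marginal increment is nonpositive,
i.e. `(K − i − 1)·u (i+1) ≤ Σ_{k=1}^i u k`. -/
theorem stmt_11 (K : ℝ) (u : ℕ → ℝ)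
    (hmono : ∀ k, 1 ≤ k → u (k + 1) ≤ u k)
    (hnonneg : ∀ k, 1 ≤ k → 0 ≤ u k)
    (i : ℕ) (hi : K ≤ 2 * i + 1) :
    (K - i - 1) * u (i + 1) ≤ ∑ k ∈ Finset.Icc 1 i, u k :=
  stmt_11_general ((antitoneOn_nat_Ici_of_succ_le hmono).mono Set.Icc_subset_Ici_self)
    (hnonneg (i + 1) (Nat.le_add_left 1 i)) hi
end

section
/- Let K ≥ 2 and L ≥ 1 be real numbers, and set μ = min{L, K/2}; assume μ ≥ 1. Then for all real numbers d and x with 1 ≤ d ≤ μ, 1 ≤ x, and x + d ≤ K, it holds that (K − x)/(d·(K − x − d + 1)) ≥ (K − 1)/(μ·(K − μ)). -/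
/-! With `t = K - x`, the ratio `(K - x) / (d * (K - x - d + 1))` is `t / (t - (d - 1)) / d`, which
decreases in `t` and so is smallest at `x = 1`, where it equals `(K - 1) / (d * (K - d))`. Raising
`d` to `μ` increases `d * (K - d)`, because the parabola `t ↦ t * (K - t)` is symmetric about
`K / 2` and `μ` lies between `d` and its mirror image `K - d`. -/

theorem mul_sub_le_mul_sub_of_add_le {R : Type*} [CommRing R] [PartialOrder R] [IsOrderedRing R]
    {K a b : R} (hab : a ≤ b) (habK : a + b ≤ K) : a * (K - a) ≤ b * (K - b) := by
  have factored : b * (K - b) - a * (K - a) = (b - a) * (K - (a + b)) := by ring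
  rw [← sub_nonneg, factored]
  exact mul_nonneg (sub_nonneg.2 hab) (sub_nonneg.2 habK)

section OrderedField

variable {𝕜 : Type*} [Field 𝕜] [LinearOrder 𝕜] [IsStrictOrderedRing 𝕜]

theorem antitoneOn_div_sub_const {c : 𝕜} (hc : 0 ≤ c) :
    AntitoneOn (fun t ↦ t / (t - c)) (Set.Ioi c) := by
  intro s hs t ht hst
  have cross_mul : t * (s - c) ≤ s * (t - c) := by
    linarith [mul_le_mul_of_nonneg_left hst hc]
  exact (div_le_div_iff₀ (sub_pos.2 ht) (sub_pos.2 hs)).2 cross_mul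

theorem stmt_14_general {K μ d x : 𝕜} (hd : 1 ≤ d) (hdμ : d ≤ μ) (hdμK : d + μ ≤ K)
    (hx : 1 ≤ x) (hxd : x + d < K + 1) :
    (K - 1) / (μ * (K - μ)) ≤ (K - x) / (d * (K - x - d + 1)) := by
  have hd_pos : 0 < d := by linarith
  have hKd_pos : 0 < K - d := by linarith
  have hK : 0 ≤ K - 1 := by linarith
  have worst_x : (K - 1) / (K - 1 - (d - 1)) ≤ (K - x) / (K - x - (d - 1)) :=
    antitoneOn_div_sub_const (sub_nonneg.2 hd) (Set.mem_Ioi.2 (by linarith))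
      (Set.mem_Ioi.2 (by linarith)) (sub_le_sub_left hx K)
  calc (K - 1) / (μ * (K - μ))
      ≤ (K - 1) / (d * (K - d)) :=
        div_le_div_of_nonneg_left hK (mul_pos hd_pos hKd_pos)
          (mul_sub_le_mul_sub_of_add_le hdμ hdμK)
    _ = (K - 1) / (K - 1 - (d - 1)) / d := by rw [sub_sub_sub_cancel_right, div_div, mul_comm d]
    _ ≤ (K - x) / (K - x - (d - 1)) / d := div_le_div_of_nonneg_right worst_x hd_pos.le
    _ = (K - x) / (d * (K - x - d + 1)) := by rw [div_div, ← sub_add, mul_comm d]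

end OrderedField

/-- Final arithmetic inequality in the proof of the paper's Lemma 3: with
`μ = min{L, K/2} ≥ 1`, for all `1 ≤ d ≤ μ`, `1 ≤ x` and `x + d ≤ K`,
`(K − x)/(d·(K − x − d + 1)) ≥ (K − 1)/(μ·(K − μ))`. -/
theorem stmt_14 (K L : ℝ) (hK : 2 ≤ K) (hL : 1 ≤ L)
    (hμ : 1 ≤ min L (K / 2)) (d x : ℝ)
    (hd1 : 1 ≤ d) (hdμ : d ≤ min L (K / 2)) (hx : 1 ≤ x) (hxd : x + d ≤ K) :
    (K - 1) / (min L (K / 2) * (K - min L (K / 2)))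
      ≤ (K - x) / (d * (K - x - d + 1)) := by
  have hμK : min L (K / 2) ≤ K / 2 := min_le_right L (K / 2)
  exact stmt_14_general hd1 hdμ (by linarith) hx (by linarith)
end
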